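/- Let r(n) be the resonator sequence with parameter L, and let ω(n), ω′(n) ≥ 0 be multiplicative functions satisfying, for some a′_{ω′} > 0 and some 0 < δ, δ′ ≤ 1: (i) Σ_{X ≤ p ≤ Y} ω′(p)/(p log p) ≥ a′_{ω′}(1/log X − 1/log Y) + O(1/log²X) for all Y ≥ 2X ≥ 4, and (ii) Σ_{p ≤ X} ω(p)^δ ω′(p) ≪ X (log X)^δ and Σ_{p ≤ X} ω′(p)^{1+δ′} ≪ X^{1+δ′/2}. Then ∏_p ( 1 + r(p) ω′(p) / ( √p (1 + r(p)² ω(p)) ) ) ≫ exp( (a′_{ω′} + o*(1)) · L/(2 log L) ), where o*(1) = O(1/(log L)^{min(δ,δ′)}). -/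

import Mathlib

open Filter

noncomputable section

/-- The value at the prime `p` of the resonator sequence with parameter `L`:
`r(p) = L/(√p log p)` for `L² ≤ p ≤ exp(log² L)`, and `r(p) = 0` otherwise. -/
def rpR (L : ℝ) (p : ℕ) : ℝ :=
  if L ^ 2 ≤ (p : ℝ) ∧ (p : ℝ) ≤ Real.exp ((Real.log L) ^ 2) then
    L / (Real.sqrt p * Real.log p) else 0

/-!
On the support of `r`, write the factor at `p` as `1 + u / (1 + x)` with
`u = r(p) ω'(p) / √p = L ω'(p) / (p log p)` and `x = r(p)² ω(p)`. It is at least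
`exp (u - u x ^ δ - u ^ (1 + δ'))`. Summing `u` over `L² ≤ p ≤ exp (log² L)` gives the main term
`a' L / (2 log L)` by hypothesis (i). The other two sums run over `p ≥ L²` and are convergent tails:
cutting them into dyadic blocks, hypothesis (ii) bounds them by `L / (log L) ^ (1 + δ)` and
`L / (log L) ^ (1 + δ')` up to constants.
-/

section Resonator

open Real Finset

section Elementary

variable {x t d : ℝ}

lemma one_sub_rpow_le_one_div_one_add (hx : 0 ≤ x) (hd : 0 ≤ d) (hd1 : d ≤ 1) :
    1 - x ^ d ≤ 1 / (1 + x) := by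
  rcases le_total x 1 with hx1 | hx1
  · calc 1 - x ^ d ≤ 1 - x := by linarith [self_le_rpow_of_le_one hx hx1 hd1]
      _ ≤ 1 / (1 + x) := by rw [le_div_iff₀ (by positivity)]; nlinarith
  · calc 1 - x ^ d ≤ 0 := by linarith [one_le_rpow hx1 hd]
      _ ≤ 1 / (1 + x) := by positivity

lemma sub_rpow_one_add_le_log_one_add (ht : 0 ≤ t) (hd : 0 ≤ d) (hd1 : d ≤ 1) :
    t - t ^ (1 + d) ≤ log (1 + t) :=
  calc t - t ^ (1 + d) = t * (1 - t ^ d) := by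
        rw [rpow_one_add' ht (by positivity)]; ring
    _ ≤ t * (1 / (1 + t)) := by gcongr; exact one_sub_rpow_le_one_div_one_add ht hd hd1
    _ = 1 - (1 + t)⁻¹ := by field_simp; ring
    _ ≤ log (1 + t) := one_sub_inv_le_log_of_pos (by positivity)

lemma exp_le_one_add_div_one_add {u d' : ℝ} (hu : 0 ≤ u) (hx : 0 ≤ x) (hd : 0 ≤ d) (hd1 : d ≤ 1)
    (hd' : 0 ≤ d') (hd'1 : d' ≤ 1) :
    exp (u - u * x ^ d - u ^ (1 + d')) ≤ 1 + u / (1 + x) := by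
  rw [← le_log_iff_exp_le (by positivity)]
  have linear_part : u - u * x ^ d ≤ u / (1 + x) :=
    calc u - u * x ^ d = u * (1 - x ^ d) := by ring
      _ ≤ u * (1 / (1 + x)) := by gcongr; exact one_sub_rpow_le_one_div_one_add hx hd hd1
      _ = u / (1 + x) := by ring
  have power_part : (u / (1 + x)) ^ (1 + d') ≤ u ^ (1 + d') := by
    gcongr
    exact div_le_self hu (by linarith)
  linarith [sub_rpow_one_add_le_log_one_add (t := u / (1 + x)) (by positivity) hd' hd'1]

end Elementary

section DyadicTails

lemma sum_le_of_dyadic_blocks {ι : Type*} (S : Finset ι) (v g : ι → ℝ) (B : ℝ → ℝ) {M q : ℝ}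
    (hM : 0 < M) (hq : q < 1)
    (block : ∀ Z, M ≤ Z → ∑ i ∈ S with Z ≤ v i ∧ v i < 2 * Z, g i ≤ B Z)
    (decay : ∀ Z, M ≤ Z → B (2 * Z) ≤ q * B Z) :
    ∑ i ∈ S with M ≤ v i, g i ≤ B M / (1 - q) := by
  have one_sub_pos : 0 < 1 - q := by linarith
  -- Peeling off the lowest block reproduces the bound: `B Z + q B Z / (1 - q) = B Z / (1 - q)`.
  have bound_below_two_pow (N : ℕ) : ∀ Z, M ≤ Z → (∀ i ∈ S, v i < 2 ^ N * Z) →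
      ∑ i ∈ S with Z ≤ v i, g i ≤ B Z / (1 - q) := by
    induction N with
    | zero =>
      intro Z hZ hS
      have hlt : ∀ i ∈ S, v i < Z := by simpa using hS
      have hB : 0 ≤ B Z := by
        simpa [filter_false_of_mem fun i hi (h : Z ≤ v i ∧ _) => (hlt i hi).not_ge h.1]
          using block Z hZ
      rw [filter_false_of_mem fun i hi => (hlt i hi).not_ge, sum_empty]
      positivity
    | succ N ih =>
      intro Z hZ hS
      have tail := ih (2 * Z) (by linarith) fun i hi => (hS i hi).trans_eq (by ring)
      have split : ∑ i ∈ S with Z ≤ v i, g i =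
          ∑ i ∈ S with Z ≤ v i ∧ v i < 2 * Z, g i + ∑ i ∈ S with 2 * Z ≤ v i, g i := by
        have absorb (i : ι) : Z ≤ v i ∧ 2 * Z ≤ v i ↔ 2 * Z ≤ v i :=
          and_iff_right_of_imp fun h => by linarith
        rw [← sum_filter_add_sum_filter_not _ (fun i => v i < 2 * Z), filter_filter, filter_filter]
        simp only [not_lt, absorb]
      calc ∑ i ∈ S with Z ≤ v i, g i ≤ B Z + B (2 * Z) / (1 - q) := by
            rw [split]; exact add_le_add (block Z hZ) tail
        _ ≤ B Z + q * B Z / (1 - q) := by gcongr; exact decay Z hZ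
        _ = B Z / (1 - q) := by field_simp; ring
  obtain ⟨V, hV⟩ := (S.image v).bddAbove
  obtain ⟨N, hN⟩ := pow_unbounded_of_one_lt (V / M) one_lt_two
  refine bound_below_two_pow N M le_rfl fun i hi => ?_
  exact (hV (mem_image_of_mem v hi)).trans_lt ((div_lt_iff₀ hM).1 hN)

variable {P : ℕ → Prop} [DecidablePred P] {f : ℕ → ℝ} {C α β : ℝ}

lemma nonneg_of_sum_le_mul_rpow_mul_log_rpow (hf : ∀ n, P n → 0 ≤ f n)
    (h : ∀ X : ℝ, 2 ≤ X → ∑ n ∈ (Iic ⌊X⌋₊).filter P, f n ≤ C * X ^ α * log X ^ β) : 0 ≤ C := by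
  have sum_nonneg : 0 ≤ ∑ n ∈ (Iic ⌊(2 : ℝ)⌋₊).filter P, f n :=
    Finset.sum_nonneg fun n hn => hf n (mem_filter.1 hn).2
  have scale_pos : 0 < (2 : ℝ) ^ α * log 2 ^ β :=
    mul_pos (rpow_pos_of_pos two_pos α) (rpow_pos_of_pos (log_pos one_lt_two) β)
  refine nonneg_of_mul_nonneg_left (sum_nonneg.trans ?_) scale_pos
  simpa only [mul_assoc] using h 2 le_rfl

lemma sum_dyadic_block_le (hf : ∀ n, P n → 0 ≤ f n) (hβ : 0 ≤ β)
    (h : ∀ X : ℝ, 2 ≤ X → ∑ n ∈ (Iic ⌊X⌋₊).filter P, f n ≤ C * X ^ α * log X ^ β)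
    {Z : ℝ} (hZ : 2 ≤ Z) {F : Finset ℕ} (hF : ∀ n ∈ F, P n ∧ (n : ℝ) < 2 * Z) :
    ∑ n ∈ F, f n ≤ C * 2 ^ (α + β) * (Z ^ α * log Z ^ β) := by
  have hC := nonneg_of_sum_le_mul_rpow_mul_log_rpow hf h
  have hlog : 0 < log Z := log_pos (by linarith)
  have log_two_mul_nonneg : 0 ≤ log (2 * Z) := log_nonneg (by linarith)
  have log_two_mul_le : log (2 * Z) ≤ 2 * log Z := by
    rw [log_mul two_ne_zero (by positivity)]
    linarith [log_le_log two_pos hZ]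
  calc ∑ n ∈ F, f n ≤ ∑ n ∈ (Iic ⌊2 * Z⌋₊).filter P, f n := by
        refine sum_le_sum_of_subset_of_nonneg (fun n hn => ?_) fun n hn _ =>
          hf n (mem_filter.1 hn).2
        exact mem_filter.2 ⟨mem_Iic.2 (Nat.le_floor (hF n hn).2.le), (hF n hn).1⟩
    _ ≤ C * (2 * Z) ^ α * log (2 * Z) ^ β := h _ (by linarith)
    _ ≤ C * (2 * Z) ^ α * (2 * log Z) ^ β := by gcongr
    _ = C * 2 ^ (α + β) * (Z ^ α * log Z ^ β) := by
        rw [mul_rpow two_pos.le (by positivity), mul_rpow two_pos.le hlog.le, rpow_add two_pos]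
        ring

variable {η γ : ℝ}

lemma sum_dyadic_block_div_le (hf : ∀ n, P n → 0 ≤ f n) (hβ : 0 ≤ β)
    (hαη : 0 ≤ α + η) (hγ : 0 ≤ γ)
    (h : ∀ X : ℝ, 2 ≤ X → ∑ n ∈ (Iic ⌊X⌋₊).filter P, f n ≤ C * X ^ α * log X ^ β)
    {Z : ℝ} (hZ : 2 ≤ Z) {F : Finset ℕ}
    (hF : ∀ n ∈ F, P n ∧ Z ≤ (n : ℝ) ∧ (n : ℝ) < 2 * Z) :
    ∑ n ∈ F, f n / ((n : ℝ) ^ (α + η) * log n ^ γ) ≤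
      C * 2 ^ (α + β) * (Z ^ (-η) * log Z ^ (β - γ)) := by
  have hZ0 : 0 < Z := by linarith
  have hlog : 0 < log Z := log_pos (by linarith)
  calc ∑ n ∈ F, f n / ((n : ℝ) ^ (α + η) * log n ^ γ)
      ≤ ∑ n ∈ F, f n / (Z ^ (α + η) * log Z ^ γ) := by
        refine sum_le_sum fun n hn => ?_
        obtain ⟨hPn, hZn, -⟩ := hF n hn
        have := hf n hPn
        gcongr
    _ = (∑ n ∈ F, f n) / (Z ^ (α + η) * log Z ^ γ) := (sum_div ..).symm
    _ ≤ C * 2 ^ (α + β) * (Z ^ α * log Z ^ β) / (Z ^ (α + η) * log Z ^ γ) := by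
        gcongr
        exact sum_dyadic_block_le hf hβ h hZ fun n hn => ⟨(hF n hn).1, (hF n hn).2.2⟩
    _ = C * 2 ^ (α + β) * (Z ^ (-η) * log Z ^ (β - γ)) := by
        rw [rpow_add hZ0, rpow_neg hZ0.le, rpow_sub hlog]
        field_simp

lemma sum_tail_div_le (hf : ∀ n, P n → 0 ≤ f n) (hαη : 0 ≤ α + η) (hβ : 0 ≤ β) (hη : 0 < η)
    (hγ : β ≤ γ)
    (h : ∀ X : ℝ, 2 ≤ X → ∑ n ∈ (Iic ⌊X⌋₊).filter P, f n ≤ C * X ^ α * log X ^ β)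
    {M : ℝ} (hM : 2 ≤ M) {S : Finset ℕ} (hS : ∀ n ∈ S, P n ∧ M ≤ (n : ℝ)) :
    ∑ n ∈ S, f n / ((n : ℝ) ^ (α + η) * log n ^ γ) ≤
      C * 2 ^ (α + β) * (M ^ (-η) * log M ^ (β - γ)) / (1 - 2 ^ (-η)) := by
  have hC := nonneg_of_sum_le_mul_rpow_mul_log_rpow hf h
  have two_rpow_neg_lt_one : (2 : ℝ) ^ (-η) < 1 :=
    rpow_lt_one_of_one_lt_of_neg one_lt_two (neg_neg_of_pos hη)
  have dyadic := sum_le_of_dyadic_blocks S (fun n => (n : ℝ))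
    (fun n => f n / ((n : ℝ) ^ (α + η) * log n ^ γ))
    (fun Z => C * 2 ^ (α + β) * (Z ^ (-η) * log Z ^ (β - γ)))
    (two_pos.trans_le hM) two_rpow_neg_lt_one
    (fun Z hZ => ?block) (fun Z hZ => ?decay)
  · rwa [filter_true_of_mem fun n hn => (hS n hn).2] at dyadic
  case block =>
    refine sum_dyadic_block_div_le hf hβ hαη (hβ.trans hγ) h (hM.trans hZ) fun n hn => ?_
    exact ⟨(hS n (mem_filter.1 hn).1).1, (mem_filter.1 hn).2⟩
  case decay =>
    have hZ0 : 0 < Z := by linarith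
    have hlog : 0 < log Z := log_pos (by linarith)
    have log_antitone : log (2 * Z) ^ (β - γ) ≤ log Z ^ (β - γ) :=
      rpow_le_rpow_of_nonpos hlog (log_le_log hZ0 (by linarith)) (by linarith)
    calc C * 2 ^ (α + β) * ((2 * Z) ^ (-η) * log (2 * Z) ^ (β - γ))
        ≤ C * 2 ^ (α + β) * ((2 * Z) ^ (-η) * log Z ^ (β - γ)) := by gcongr
      _ = 2 ^ (-η) * (C * 2 ^ (α + β) * (Z ^ (-η) * log Z ^ (β - γ))) := by
          rw [mul_rpow two_pos.le hZ0.le]; ring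

end DyadicTails

section ResonatorPrimes

/-- The primes `L² ≤ p ≤ exp (log² L)` at which the resonator sequence with parameter `L` is
supported. -/
def resonatorPrimes (L : ℝ) : Finset ℕ :=
  (Icc ⌈L ^ 2⌉₊ ⌊exp (log L ^ 2)⌋₊).filter Nat.Prime

variable {L : ℝ} {p : ℕ}

lemma mem_resonatorPrimes :
    p ∈ resonatorPrimes L ↔ (L ^ 2 ≤ (p : ℝ) ∧ (p : ℝ) ≤ exp (log L ^ 2)) ∧ p.Prime := by
  rw [resonatorPrimes, mem_filter, mem_Icc, Nat.ceil_le, Nat.le_floor_iff (exp_pos _).le]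

lemma rpR_of_mem_resonatorPrimes (hp : p ∈ resonatorPrimes L) : rpR L p = L / (√p * log p) :=
  if_pos (mem_resonatorPrimes.1 hp).1

lemma rpR_of_notMem_resonatorPrimes (hp : p.Prime) (hpL : p ∉ resonatorPrimes L) : rpR L p = 0 :=
  if_neg fun h => hpL (mem_resonatorPrimes.2 ⟨h, hp⟩)

/-- The factor at `p` of the Euler product whose size is the resonator gain. -/
def gainFactor (ω ω' : ℕ → ℝ) (L : ℝ) (p : ℕ) : ℝ :=
  1 + rpR L p * ω' p / (√p * (1 + rpR L p ^ 2 * ω p))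

lemma tprod_primes_eq_prod {g : ℕ → ℝ} {S : Finset ℕ} (hS : ∀ p ∈ S, p.Prime)
    (hg : ∀ p, p.Prime → p ∉ S → g p = 1) : ∏' p : Nat.Primes, g p = ∏ p ∈ S, g p := by
  have support : ∀ p : Nat.Primes, p ∉ S.subtype Nat.Prime → g p = 1 := fun p hp =>
    hg p p.2 fun hpS => hp (mem_subtype.2 hpS)
  exact (tprod_eq_prod support).trans (prod_subtype_of_mem g hS)

lemma tprod_gainFactor (ω ω' : ℕ → ℝ) (L : ℝ) :
    ∏' p : Nat.Primes, gainFactor ω ω' L p = ∏ p ∈ resonatorPrimes L, gainFactor ω ω' L p :=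
  tprod_primes_eq_prod (fun _ hp => (mem_resonatorPrimes.1 hp).2) fun p hp hpL => by
    simp [gainFactor, rpR_of_notMem_resonatorPrimes hp hpL]

variable {ω ω' : ℕ → ℝ}

lemma gainFactor_of_mem_resonatorPrimes (hp : p ∈ resonatorPrimes L) :
    gainFactor ω ω' L p =
      1 + L * (ω' p / (p * log p)) / (1 + L ^ 2 * (ω p / (p * log p ^ 2))) := by
  have hsq : √(p : ℝ) ^ 2 = p := sq_sqrt p.cast_nonneg
  have numerator : L / (√p * log p) * ω' p / √p = L * (ω' p / (p * log p)) :=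
    calc L / (√p * log p) * ω' p / √p = L * (ω' p / (√p ^ 2 * log p)) := by ring
      _ = L * (ω' p / (p * log p)) := by rw [hsq]
  have denominator : (L / (√p * log p)) ^ 2 * ω p = L ^ 2 * (ω p / (p * log p ^ 2)) := by
    rw [div_pow, mul_pow, hsq]; ring
  rw [gainFactor, rpR_of_mem_resonatorPrimes hp, ← div_div, numerator, denominator]

section Exponents

variable {δ δ' x l w w' : ℝ}

lemma mainTerm_mul_dampingTerm_rpow (hx : 0 < x) (hl : 0 < l) (hw : 0 ≤ w) :
    L * (w' / (x * l)) * (L ^ 2 * (w / (x * l ^ 2))) ^ δ =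
      L * (L ^ 2) ^ δ * (w ^ δ * w' / (x ^ (1 + δ) * l ^ (1 + 2 * δ))) := by
  rw [mul_rpow (by positivity) (by positivity), div_rpow hw (by positivity),
    mul_rpow hx.le (by positivity), rpow_add hx, rpow_add hl, rpow_one, rpow_one,
    rpow_mul hl.le, rpow_two]
  ring

lemma mainTerm_rpow_one_add (hL : 0 < L) (hx : 0 < x) (hl : 0 ≤ l) (hw' : 0 ≤ w') :
    (L * (w' / (x * l))) ^ (1 + δ') = L * (L ^ 2) ^ (δ' / 2) *
      (w' ^ (1 + δ') / (x ^ (1 + δ' / 2 + δ' / 2) * l ^ (1 + δ'))) := by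
  have hLpow : L ^ (1 + δ') = L * (L ^ 2) ^ (δ' / 2) := by
    rw [rpow_add hL, rpow_one, ← rpow_two, ← rpow_mul hL.le, mul_div_cancel₀ _ two_ne_zero]
  rw [mul_rpow hL.le (by positivity), div_rpow hw' (by positivity), mul_rpow hx.le hl, hLpow,
    add_assoc 1, add_halves]

end Exponents

lemma exp_mainTerm_sub_errorTerms_le_gainFactor {δ δ' : ℝ} (hδ : 0 ≤ δ) (hδ1 : δ ≤ 1) (hδ' : 0 ≤ δ')
    (hδ'1 : δ' ≤ 1) (hL : 0 < L) (hp : p ∈ resonatorPrimes L) (hω : 0 ≤ ω p) (hω' : 0 ≤ ω' p) :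
    exp (L * (ω' p / (p * log p)) -
        L * (L ^ 2) ^ δ * (ω p ^ δ * ω' p / ((p : ℝ) ^ (1 + δ) * log p ^ (1 + 2 * δ))) -
        L * (L ^ 2) ^ (δ' / 2) *
          (ω' p ^ (1 + δ') / ((p : ℝ) ^ (1 + δ' / 2 + δ' / 2) * log p ^ (1 + δ')))) ≤
      gainFactor ω ω' L p := by
  have one_lt : (1 : ℝ) < p := mod_cast (mem_resonatorPrimes.1 hp).2.one_lt
  have p_pos : (0 : ℝ) < p := by linarith
  have log_p_pos : 0 < log p := log_pos one_lt
  rw [gainFactor_of_mem_resonatorPrimes hp, ← mainTerm_mul_dampingTerm_rpow p_pos log_p_pos hω,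
    ← mainTerm_rpow_one_add hL p_pos log_p_pos.le hω']
  exact exp_le_one_add_div_one_add (by positivity) (by positivity) hδ hδ1 hδ' hδ'1

lemma exp_mainTerm_sub_errorTerms_le_tprod_gainFactor {δ δ' : ℝ} (hδ : 0 ≤ δ) (hδ1 : δ ≤ 1)
    (hδ' : 0 ≤ δ') (hδ'1 : δ' ≤ 1) (hL : 0 < L) (hω : ∀ p, p.Prime → 0 ≤ ω p)
    (hω' : ∀ p, p.Prime → 0 ≤ ω' p) :
    exp (L * ∑ p ∈ resonatorPrimes L, ω' p / (p * log p) -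
        L * (L ^ 2) ^ δ * ∑ p ∈ resonatorPrimes L,
          ω p ^ δ * ω' p / ((p : ℝ) ^ (1 + δ) * log p ^ (1 + 2 * δ)) -
        L * (L ^ 2) ^ (δ' / 2) * ∑ p ∈ resonatorPrimes L,
          ω' p ^ (1 + δ') / ((p : ℝ) ^ (1 + δ' / 2 + δ' / 2) * log p ^ (1 + δ'))) ≤
      ∏' p : Nat.Primes, gainFactor ω ω' L p := by
  rw [tprod_gainFactor, mul_sum, mul_sum, mul_sum, ← sum_sub_distrib, ← sum_sub_distrib, exp_sum]
  refine prod_le_prod (fun p _ => (exp_pos _).le) fun p hp => ?_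
  have hpp := (mem_resonatorPrimes.1 hp).2
  exact exp_mainTerm_sub_errorTerms_le_gainFactor hδ hδ1 hδ' hδ'1 hL hp (hω p hpp) (hω' p hpp)

lemma le_mul_sum_resonatorPrimes {g : ℕ → ℝ} {a C μ : ℝ}
    (h : ∀ X Y : ℝ, 2 ≤ X → 2 * X ≤ Y →
      a * (1 / log X - 1 / log Y) - C / log X ^ 2 ≤
        ∑ p ∈ (Icc ⌈X⌉₊ ⌊Y⌋₊).filter Nat.Prime, g p)
    (hL : exp 3 ≤ L) (hμ : μ ≤ 2) :
    a * (L / (2 * log L)) - (|a| + |C|) * (L / log L ^ μ) ≤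
      L * ∑ p ∈ resonatorPrimes L, g p := by
  have L_pos : 0 < L := (exp_pos 3).trans_le hL
  have three_le_log : 3 ≤ log L := (le_log_iff_exp_le L_pos).2 hL
  have four_le : 4 ≤ L := by linarith [add_one_le_exp (3 : ℝ)]
  have log_sq : log (L ^ 2) = 2 * log L := by rw [log_pow]; norm_num
  have range : 2 * L ^ 2 ≤ exp (log L ^ 2) := by
    rw [← log_le_iff_le_exp (by positivity), log_mul two_ne_zero (by positivity), log_sq]
    nlinarith [log_two_lt_d9]
  have sum_ge := h (L ^ 2) (exp (log L ^ 2)) (by nlinarith) range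
  rw [log_sq, log_exp] at sum_ge
  have log_rpow_le : log L ^ μ ≤ log L ^ 2 := by
    rw [← rpow_two]
    exact rpow_le_rpow_of_exponent_le (by linarith) hμ
  calc a * (L / (2 * log L)) - (|a| + |C|) * (L / log L ^ μ)
      ≤ a * (L / (2 * log L)) - (|a| + |C|) * (L / log L ^ 2) := by gcongr
    _ ≤ a * (L / (2 * log L)) - (a + C / 4) * (L / log L ^ 2) := by
        gcongr
        · exact le_abs_self a
        · linarith [le_abs_self C, abs_nonneg C]
    _ = L * (a * (1 / (2 * log L) - 1 / log L ^ 2) - C / (2 * log L) ^ 2) := by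
        field_simp; ring
    _ ≤ L * ∑ p ∈ resonatorPrimes L, g p := by gcongr; exact sum_ge

-- The factor `(L ^ 2) ^ η` is exactly what a tail starting at `p ≥ L ^ 2` saves.
lemma exists_mul_sum_resonatorPrimes_le {f : ℕ → ℝ} {C α β η γ : ℝ}
    (hf : ∀ p, p.Prime → 0 ≤ f p) (hαη : 0 ≤ α + η) (hβ : 0 ≤ β) (hη : 0 < η) (hγ : β ≤ γ)
    (h : ∀ X : ℝ, 2 ≤ X →
      ∑ p ∈ (Iic ⌊X⌋₊).filter Nat.Prime, f p ≤ C * X ^ α * log X ^ β) :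
    ∃ A, 0 ≤ A ∧ ∀ L, exp 1 ≤ L → ∀ μ ≤ γ - β,
      L * (L ^ 2) ^ η * ∑ p ∈ resonatorPrimes L, f p / ((p : ℝ) ^ (α + η) * log p ^ γ) ≤
        A * (L / log L ^ μ) := by
  have hC := nonneg_of_sum_le_mul_rpow_mul_log_rpow hf h
  have one_sub_pos : 0 < 1 - (2 : ℝ) ^ (-η) :=
    sub_pos.2 (rpow_lt_one_of_one_lt_of_neg one_lt_two (neg_neg_of_pos hη))
  refine ⟨C * 2 ^ (α + β) / (1 - 2 ^ (-η)), by positivity, fun L hL μ hμ => ?_⟩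
  have L_pos : 0 < L := (exp_pos 1).trans_le hL
  have one_le_log : 1 ≤ log L := (le_log_iff_exp_le L_pos).2 hL
  have two_le : 2 ≤ L := by linarith [add_one_le_exp (1 : ℝ)]
  have tail := sum_tail_div_le hf hαη hβ hη hγ h (M := L ^ 2) (by nlinarith)
    (S := resonatorPrimes L) fun p hp =>
      ⟨(mem_resonatorPrimes.1 hp).2, (mem_resonatorPrimes.1 hp).1.1⟩
  have log_sq_rpow_le : log (L ^ 2) ^ (β - γ) ≤ 1 / log L ^ μ :=
    calc log (L ^ 2) ^ (β - γ) ≤ log L ^ (β - γ) :=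
          rpow_le_rpow_of_nonpos (by linarith) (log_le_log L_pos (by nlinarith)) (by linarith)
      _ ≤ log L ^ (-μ) := rpow_le_rpow_of_exponent_le one_le_log (by linarith)
      _ = 1 / log L ^ μ := by rw [rpow_neg (by linarith), one_div]
  calc L * (L ^ 2) ^ η * ∑ p ∈ resonatorPrimes L, f p / ((p : ℝ) ^ (α + η) * log p ^ γ)
      ≤ L * (L ^ 2) ^ η *
        (C * 2 ^ (α + β) * ((L ^ 2) ^ (-η) * log (L ^ 2) ^ (β - γ)) / (1 - 2 ^ (-η))) := by
        gcongr
    _ = C * 2 ^ (α + β) / (1 - 2 ^ (-η)) * (L * log (L ^ 2) ^ (β - γ)) := by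
        rw [rpow_neg (sq_nonneg L)]; field_simp
    _ ≤ C * 2 ^ (α + β) / (1 - 2 ^ (-η)) * (L * (1 / log L ^ μ)) := by gcongr
    _ = C * 2 ^ (α + β) / (1 - 2 ^ (-η)) * (L / log L ^ μ) := by ring

end ResonatorPrimes

theorem resonator_gain_general
    (ω ω' : ℕ → ℝ) (hω0 : ∀ p, p.Prime → 0 ≤ ω p) (hω'0 : ∀ p, p.Prime → 0 ≤ ω' p)
    (a' δ δ' : ℝ) (hδ : 0 < δ) (hδ1 : δ ≤ 1) (hδ' : 0 < δ') (hδ'1 : δ' ≤ 1)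
    (C₁ C₂ C₃ : ℝ)
    (h1 : ∀ X Y : ℝ, 2 ≤ X → 2 * X ≤ Y →
      a' * (1 / log X - 1 / log Y) - C₁ / log X ^ 2 ≤
        ∑ p ∈ (Icc ⌈X⌉₊ ⌊Y⌋₊).filter Nat.Prime, ω' p / (p * log p))
    (h2 : ∀ X : ℝ, 2 ≤ X →
      ∑ p ∈ (Iic ⌊X⌋₊).filter Nat.Prime, ω p ^ δ * ω' p ≤ C₂ * X * log X ^ δ)
    (h3 : ∀ X : ℝ, 2 ≤ X →
      ∑ p ∈ (Iic ⌊X⌋₊).filter Nat.Prime, ω' p ^ (1 + δ') ≤ C₃ * X ^ (1 + δ' / 2)) :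
    ∃ K : ℝ, 0 ≤ K ∧ ∀ L : ℝ, exp 3 ≤ L →
      exp ((a' - K / log L ^ min δ δ') * (L / (2 * log L))) ≤
        ∏' p : Nat.Primes, gainFactor ω ω' L p := by
  obtain ⟨A, hA0, damping_le⟩ := exists_mul_sum_resonatorPrimes_le (α := 1) (γ := 1 + 2 * δ)
    (f := fun p => ω p ^ δ * ω' p)
    (fun p hp => mul_nonneg (rpow_nonneg (hω0 p hp) _) (hω'0 p hp))
    (by positivity) hδ.le hδ (by linarith) (by simpa only [rpow_one] using h2)
  obtain ⟨B, hB0, power_le⟩ := exists_mul_sum_resonatorPrimes_le (α := 1 + δ' / 2) (β := 0)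
    (η := δ' / 2) (γ := 1 + δ') (f := fun p => ω' p ^ (1 + δ'))
    (fun p hp => rpow_nonneg (hω'0 p hp) _) (by positivity) le_rfl (by positivity) (by positivity)
    (by simpa only [rpow_zero, mul_one] using h3)
  refine ⟨2 * (|a'| + |C₁| + A + B), by positivity, fun L hL => ?_⟩
  have exp_one_le : exp 1 ≤ L := (exp_le_exp.2 (by norm_num)).trans hL
  have L_pos : 0 < L := (exp_pos 3).trans_le hL
  have log_L_pos : 0 < log L := log_pos ((one_lt_exp_iff.2 one_pos).trans_le exp_one_le)
  have min_le_δ := min_le_left δ δ'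
  have min_le_δ' := min_le_right δ δ'
  have main := le_mul_sum_resonatorPrimes (μ := 1 + min δ δ') h1 hL (by linarith)
  have damping := damping_le L exp_one_le (1 + min δ δ') (by linarith)
  have power := power_le L exp_one_le (1 + min δ δ') (by linarith)
  refine (exp_le_exp.2 ?_).trans
    (exp_mainTerm_sub_errorTerms_le_tprod_gainFactor hδ.le hδ1 hδ'.le hδ'1 L_pos hω0 hω'0)
  calc (a' - 2 * (|a'| + |C₁| + A + B) / log L ^ min δ δ') * (L / (2 * log L))
      = a' * (L / (2 * log L)) -
          (|a'| + |C₁| + A + B) * (L / log L ^ (1 + min δ δ')) := by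
        rw [rpow_add log_L_pos, rpow_one]; field_simp
    _ ≤ _ := by linarith

end Resonator

/-- The resonator gain (extreme values range).  Let `r(n)` be the resonator sequence with
parameter `L`, and let `ω, ω′ ≥ 0` be multiplicative functions satisfying, for some
`a′ > 0` and `0 < δ, δ′ ≤ 1`:
`Σ_{X ≤ p ≤ Y} ω′(p)/(p log p) ≥ a′(1/log X − 1/log Y) + O(1/log²X)` for all `Y ≥ 2X ≥ 4`,
`Σ_{p ≤ X} ω(p)^δ ω′(p) ≪ X (log X)^δ` and `Σ_{p ≤ X} ω′(p)^{1+δ′} ≪ X^{1+δ′/2}`.  Then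
`Π_p (1 + r(p)ω′(p)/(√p(1 + r(p)²ω(p)))) ≫ exp((a′ + o*(1)) L/(2 log L))`, where
`o*(1) = O(1/(log L)^{min(δ,δ′)})`. -/
theorem resonator_gain
    (ω ω' : ℕ → ℝ) (hω0 : ∀ n, 0 ≤ ω n) (hω'0 : ∀ n, 0 ≤ ω' n)
    (hωm : ∀ m n : ℕ, Nat.Coprime m n → ω (m * n) = ω m * ω n)
    (hω'm : ∀ m n : ℕ, Nat.Coprime m n → ω' (m * n) = ω' m * ω' n)
    (a' δ δ' : ℝ) (ha' : 0 < a')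
    (hδ : 0 < δ) (hδ1 : δ ≤ 1) (hδ' : 0 < δ') (hδ'1 : δ' ≤ 1)
    (C₁ : ℝ)
    (h1 : ∀ X Y : ℝ, 2 ≤ X → 2 * X ≤ Y →
      a' * (1 / Real.log X - 1 / Real.log Y) - C₁ / (Real.log X) ^ 2 ≤
        ∑ p ∈ (Finset.Icc ⌈X⌉₊ ⌊Y⌋₊).filter Nat.Prime, ω' p / (p * Real.log p))
    (C₂ : ℝ)
    (h2 : ∀ X : ℝ, 2 ≤ X →
      ∑ p ∈ (Finset.Iic ⌊X⌋₊).filter Nat.Prime, (ω p) ^ δ * ω' p ≤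
        C₂ * X * (Real.log X) ^ δ)
    (C₃ : ℝ)
    (h3 : ∀ X : ℝ, 2 ≤ X →
      ∑ p ∈ (Finset.Iic ⌊X⌋₊).filter Nat.Prime, (ω' p) ^ (1 + δ') ≤
        C₃ * X ^ (1 + δ' / 2)) :
    ∃ c K L₀ : ℝ, 0 < c ∧ 0 ≤ K ∧ ∀ L : ℝ, L₀ ≤ L →
      c * Real.exp ((a' - K / (Real.log L) ^ (min δ δ')) * (L / (2 * Real.log L))) ≤
        ∏' p : Nat.Primes,
          (1 + rpR L p * ω' p / (Real.sqrt p * (1 + (rpR L p) ^ 2 * ω p))) := by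
  obtain ⟨K, hK, gain⟩ := resonator_gain_general ω ω' (fun p _ => hω0 p) (fun p _ => hω'0 p)
    a' δ δ' hδ hδ1 hδ' hδ'1 C₁ C₂ C₃ h1 h2 h3
  exact ⟨1, K, Real.exp 3, one_pos, hK, fun L hL => (one_mul _).trans_le (gain L hL)⟩

end
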